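/- arXiv:2011.09758 — 2 statements merged into one kernel-verified Lean document; each statement's English description precedes it below -/
import Mathlib

section
/- Let U be a distributive submodular universe and 𝒫 a set of pairwise distinguishable strongly robust profiles in U. Suppose r and s are F_d-critical separations in U with r ≤ s*. Then every splice between r and s* is weakly oriented by every profile in 𝒫. -/
namespace SepDemo

/-- A universe of separations: a finite lattice with an order-reversing involution. -/
structure SepUniverse (U : Type*) [Lattice U] [Fintype U] where
  inv : U → U
  inv_inv : ∀ s, inv (inv s) = s
  le_iff : ∀ r s : U, r ≤ s ↔ inv s ≤ inv r

/-- A submodular universe: a universe with a submodular order function. -/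
structure SubmodUniverse (U : Type*) [Lattice U] [Fintype U] extends SepUniverse U where
  ord : U → ℕ
  ord_inv : ∀ s, ord (inv s) = ord s
  submod : ∀ s t : U, ord (s ⊔ t) + ord (s ⊓ t) ≤ ord s + ord t

variable {U : Type*} [Lattice U] [Fintype U]

/-- A separation system inside a universe: a subset closed under the involution. -/
def SepSystem (𝒰 : SepUniverse U) (S : Set U) : Prop :=
  ∀ s ∈ S, 𝒰.inv s ∈ S

/-- An orientation of `S`: contains, for each `s ∈ S`, exactly one of `s`, `s*`
(just `s` itself if `s` is degenerate). -/
def IsOrientation (𝒰 : SepUniverse U) (S O : Set U) : Prop :=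
  O ⊆ S ∧ ∀ s ∈ S, (s ∈ O ∨ 𝒰.inv s ∈ O) ∧ (s ∈ O → 𝒰.inv s ∈ O → s = 𝒰.inv s)

/-- Consistency: no `r, s ∈ O` with `{r,r*} ≠ {s,s*}` and `r* ≤ s`. -/
def Consistent (𝒰 : SepUniverse U) (O : Set U) : Prop :=
  ∀ r ∈ O, ∀ s ∈ O, ({r, 𝒰.inv r} : Set U) ≠ ({s, 𝒰.inv s} : Set U) → ¬ 𝒰.inv r ≤ s

/-- A profile of `S`: a consistent orientation satisfying the profile property. -/
def IsProfile (𝒰 : SepUniverse U) (S P : Set U) : Prop :=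
  IsOrientation 𝒰 S P ∧ Consistent 𝒰 P ∧ ∀ r ∈ P, ∀ s ∈ P, 𝒰.inv (r ⊔ s) ∉ P

/-- Regular: contains no cosmall separation. -/
def Regular (𝒰 : SepUniverse U) (P : Set U) : Prop :=
  ∀ s ∈ P, ¬ 𝒰.inv s ≤ s

/-- Two separations are nested. -/
def Nested (𝒰 : SepUniverse U) (r s : U) : Prop :=
  r ≤ s ∨ r ≤ 𝒰.inv s ∨ 𝒰.inv r ≤ s ∨ 𝒰.inv r ≤ 𝒰.inv s

/-- A set of separations is nested if its members are pairwise nested. -/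
def NestedSet (𝒰 : SepUniverse U) (N : Set U) : Prop :=
  ∀ r ∈ N, ∀ s ∈ N, Nested 𝒰 r s

/-- `s` distinguishes the orientations `O₁` and `O₂`. -/
def Distinguishes (𝒰 : SepUniverse U) (s : U) (O₁ O₂ : Set U) : Prop :=
  (s ∈ O₁ ∧ 𝒰.inv s ∈ O₂) ∨ (𝒰.inv s ∈ O₁ ∧ s ∈ O₂)

/-- Two orientations are distinguishable. -/
def Distinguishable (𝒰 : SepUniverse U) (P Q : Set U) : Prop :=
  ∃ s : U, Distinguishes 𝒰 s P Q

/-- Structural submodularity of a separation system. -/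
def StructSubmodular (S : Set U) : Prop :=
  ∀ s ∈ S, ∀ t ∈ S, s ⊔ t ∈ S ∨ s ⊓ t ∈ S

/-- `s` is trivial in `S`. -/
def IsTrivialIn (𝒰 : SepUniverse U) (S : Set U) (s : U) : Prop :=
  ∃ r ∈ S, ({r, 𝒰.inv r} : Set U) ≠ ({s, 𝒰.inv s} : Set U) ∧ s ≤ r ∧ s ≤ 𝒰.inv r

/-- A star of separations. -/
def IsStar (𝒰 : SepUniverse U) (σ : Set U) : Prop :=
  ∀ r ∈ σ, ∀ s ∈ σ, r ≠ s → r ≤ 𝒰.inv s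

/-- The shift `σ_x^{s₀}` of a star `σ` at `x ∈ σ` to `s₀`. -/
def shiftStar (𝒰 : SepUniverse U) (σ : Set U) (x s₀ : U) : Set U :=
  insert (x ⊔ s₀) ((fun y => y ⊓ 𝒰.inv s₀) '' (σ \ {x}))

/-- `s₀` emulates `r` in `S`. -/
def Emulates (𝒰 : SepUniverse U) (S : Set U) (s₀ r : U) : Prop :=
  r ≤ s₀ ∧ ∀ t ∈ S, t ≠ 𝒰.inv r → r ≤ t → t ⊔ s₀ ∈ S

/-- `s₀` emulates `r` in `S` for a set `F` of stars. -/
def EmulatesFor (𝒰 : SepUniverse U) (S : Set U) (F : Set (Set U)) (s₀ r : U) : Prop :=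
  Emulates 𝒰 S s₀ r ∧
    ∀ σ ∈ F, 𝒰.inv r ∉ σ → ∀ x ∈ σ, r ≤ x → shiftStar 𝒰 σ x s₀ ∈ F

/-- `F` forces `s`. -/
def Forces (𝒰 : SepUniverse U) (F : Set (Set U)) (s : U) : Prop :=
  ({𝒰.inv s} : Set U) ∈ F

/-- `S` is `F`-separable. -/
def FSeparable (𝒰 : SepUniverse U) (S : Set U) (F : Set (Set U)) : Prop :=
  ∀ r₁ ∈ S, ∀ r₂ ∈ S,
    ¬ IsTrivialIn 𝒰 S r₁ → ¬ IsTrivialIn 𝒰 S r₂ →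
    r₁ ≠ 𝒰.inv r₁ → r₂ ≠ 𝒰.inv r₂ →
    ¬ Forces 𝒰 F r₁ → ¬ Forces 𝒰 F r₂ →
    r₁ ≤ 𝒰.inv r₂ →
    ∃ s₀ ∈ S, r₁ ≤ s₀ ∧ s₀ ≤ 𝒰.inv r₂ ∧
      EmulatesFor 𝒰 S F s₀ r₁ ∧ EmulatesFor 𝒰 S F (𝒰.inv s₀) r₂

/-- `r` is `F`-critical. -/
def FCritical (𝒰 : SepUniverse U) (F : Set (Set U)) (r : U) : Prop :=
  (∃ σ ∈ F, r ∈ σ) ∧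
    ¬ ∃ σ' ∈ F, σ' ∩ ({r, 𝒰.inv r} : Set U) = ({𝒰.inv r} : Set U)

/-- `S` is critically `F`-separable. -/
def CritFSeparable (𝒰 : SepUniverse U) (S : Set U) (F : Set (Set U)) : Prop :=
  ∀ r₁ ∈ S, ∀ r₂ ∈ S, FCritical 𝒰 F r₁ → FCritical 𝒰 F r₂ → r₁ ≤ 𝒰.inv r₂ →
    ∃ s₀ ∈ S, EmulatesFor 𝒰 S F s₀ r₁ ∧ EmulatesFor 𝒰 S F (𝒰.inv s₀) r₂

/-- An `F`-tangle of `S`: a consistent orientation including no member of `F`. -/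
def FTangle (𝒰 : SepUniverse U) (S : Set U) (F : Set (Set U)) (O : Set U) : Prop :=
  IsOrientation 𝒰 S O ∧ Consistent 𝒰 O ∧ ∀ σ ∈ F, ¬ σ ⊆ O

/-- `F` is standard for `S`: it forces all trivial separations of `S`. -/
def StandardFor (𝒰 : SepUniverse U) (S : Set U) (F : Set (Set U)) : Prop :=
  ∀ r ∈ S, IsTrivialIn 𝒰 S r → ({𝒰.inv r} : Set U) ∈ F

/-- An `S`-tree: a finite tree together with edge labels in `S` commuting with
the involution. -/
structure STree (𝒰 : SepUniverse U) (S : Set U) where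
  V : Type
  fintypeV : Fintype V
  G : SimpleGraph V
  isTree : G.IsTree
  label : V → V → U
  label_mem : ∀ x y, G.Adj x y → label x y ∈ S
  label_inv : ∀ x y, G.Adj x y → label y x = 𝒰.inv (label x y)

namespace STree

variable {𝒰 : SepUniverse U} {S : Set U}

/-- The star `α(t)` associated with a node `t`. -/
def nodeStar (T : STree 𝒰 S) (t : T.V) : Set U :=
  {u | ∃ s, T.G.Adj s t ∧ T.label s t = u}

/-- The `S`-tree is over `F`. -/
def Over (T : STree 𝒰 S) (F : Set (Set U)) : Prop :=
  ∀ t : T.V, T.nodeStar t ∈ F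

/-- Irredundance of an `S`-tree. -/
def Irredundant (T : STree 𝒰 S) : Prop :=
  ∀ t t' t'' : T.V, T.G.Adj t' t → T.G.Adj t'' t → t' ≠ t'' →
    T.label t' t ≠ T.label t'' t

/-- The set of edge labels of the tree. -/
def labels (T : STree 𝒰 S) : Set U :=
  {u | ∃ x y, T.G.Adj x y ∧ T.label x y = u}

/-- `t` is a sink of the orientation of the tree induced by `P`. -/
def IsSinkOf (T : STree 𝒰 S) (P : Set U) (t : T.V) : Prop :=
  ∀ s, T.G.Adj s t → T.label s t ∈ P

/-- The degree of a node. -/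
noncomputable def deg (T : STree 𝒰 S) (t : T.V) : ℕ :=
  (T.G.neighborSet t).ncard

/-- The maximum degree of the tree. -/
noncomputable def maxDeg (T : STree 𝒰 S) : ℕ :=
  sSup {n | ∃ t : T.V, T.deg t = n}

end STree

/-- A tree of tangles for `S`: an irredundant `S`-tree whose edge labels
distinguish every two distinct regular profiles of `S`. -/
def TreeOfTangles (𝒰 : SepUniverse U) (S : Set U) (T : STree 𝒰 S) : Prop :=
  T.Irredundant ∧
    ∀ P Q : Set U, IsProfile 𝒰 S P → Regular 𝒰 P → IsProfile 𝒰 S Q → Regular 𝒰 Q →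
      P ≠ Q → ∃ s ∈ T.labels, Distinguishes 𝒰 s P Q

/-- `δ(P)`: the minimum size of a subset of `P` distinguishing `P` from every
other regular profile of `S`. -/
noncomputable def deltaP (𝒰 : SepUniverse U) (S P : Set U) : ℕ :=
  sInf {n | ∃ D : Set U, D ⊆ P ∧ D.ncard = n ∧
    ∀ Q : Set U, IsProfile 𝒰 S Q → Regular 𝒰 Q → Q ≠ P →
      ∃ s ∈ D, Distinguishes 𝒰 s P Q}

/-- `S_k`: the separations of order less than `k`. -/
def Sk (𝒱 : SubmodUniverse U) (k : ℕ) : Set U := {s | 𝒱.ord s < k}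

/-- `s` distinguishes `P` and `Q` efficiently. -/
def EffDistinguishes (𝒱 : SubmodUniverse U) (s : U) (P Q : Set U) : Prop :=
  Distinguishes 𝒱.toSepUniverse s P Q ∧
    ∀ t : U, Distinguishes 𝒱.toSepUniverse t P Q → 𝒱.ord s ≤ 𝒱.ord t

/-- Property `Eff(P)` of a star `σ`. -/
def EffProp (𝒱 : SubmodUniverse U) (σ P : Set U) : Prop :=
  ¬ ∃ s ∈ σ, ∃ s' ∈ P, s ≤ s' ∧ 𝒱.ord s' < 𝒱.ord s

/-- `s` is a splice for `r`. -/
def SpliceFor (𝒱 : SubmodUniverse U) (s r : U) : Prop :=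
  r ≤ s ∧ ¬ ∃ t : U, r ≤ t ∧ t ≤ s ∧ 𝒱.ord t < 𝒱.ord s

/-- `s` is a splice between `r₁` and `r₂`. -/
def SpliceBetween (𝒱 : SubmodUniverse U) (s r₁ r₂ : U) : Prop :=
  r₁ ≤ s ∧ s ≤ r₂ ∧ ∀ t : U, r₁ ≤ t → t ≤ r₂ → 𝒱.ord s ≤ 𝒱.ord t

/-- The set `F_e` of stars in `S_k` included in at most one profile of `𝔓` and
satisfying `Eff(P)` whenever included in `P ∈ 𝔓`. -/
def Fe (𝒱 : SubmodUniverse U) (k : ℕ) (𝔓 : Set (Set U)) : Set (Set U) :=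
  {σ | σ ⊆ Sk 𝒱 k ∧ IsStar 𝒱.toSepUniverse σ ∧
    (∀ P ∈ 𝔓, ∀ Q ∈ 𝔓, σ ⊆ P → σ ⊆ Q → P = Q) ∧
    (∀ P ∈ 𝔓, σ ⊆ P → EffProp 𝒱 σ P)}

/-- `δ_e(P)`: the minimum size of a star `σ ⊆ P` with `Eff(P)` such that every
other regular profile of `S_k` contains the inverse of some element of `σ`. -/
noncomputable def deltaE (𝒱 : SubmodUniverse U) (k : ℕ) (P : Set U) : ℕ :=
  sInf {n | ∃ σ : Set U, σ ⊆ P ∧ IsStar 𝒱.toSepUniverse σ ∧ EffProp 𝒱 σ P ∧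
    σ.ncard = n ∧
    ∀ Q : Set U, IsProfile 𝒱.toSepUniverse (Sk 𝒱 k) Q → Regular 𝒱.toSepUniverse Q →
      Q ≠ P → ∃ s ∈ σ, 𝒱.inv s ∈ Q}

/-- `δ_{e,max}`: maximum of `δ_e` over all regular profiles of `S_k`. -/
noncomputable def deltaEMax (𝒱 : SubmodUniverse U) (k : ℕ) : ℕ :=
  sSup {n | ∃ P : Set U, IsProfile 𝒱.toSepUniverse (Sk 𝒱 k) P ∧
    Regular 𝒱.toSepUniverse P ∧ deltaE 𝒱 k P = n}

/-- `P` is a profile in `U`: a `k`-profile for some `k`. -/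
def ProfileIn (𝒱 : SubmodUniverse U) (P : Set U) : Prop :=
  ∃ k : ℕ, IsProfile 𝒱.toSepUniverse (Sk 𝒱 k) P

/-- Strong robustness of a profile. -/
def StronglyRobust (𝒱 : SubmodUniverse U) (P : Set U) : Prop :=
  ∀ s ∈ P, ∀ r : U, 𝒱.ord (s ⊔ r) ≤ 𝒱.ord s → 𝒱.ord (s ⊔ 𝒱.inv r) ≤ 𝒱.ord s →
    (s ⊔ r ∈ P ∨ s ⊔ 𝒱.inv r ∈ P)

/-- `O` weakly orients a separation as `s'` if `s' ≤ r` for some `r ∈ O`. -/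
def WeaklyOrientsAs (O : Set U) (s' : U) : Prop :=
  ∃ r ∈ O, s' ≤ r

/-- `O` weakly orients `s` (as `s` or as `s*`). -/
def WeaklyOrients (𝒰 : SepUniverse U) (O : Set U) (s : U) : Prop :=
  WeaklyOrientsAs O s ∨ WeaklyOrientsAs O (𝒰.inv s)

/-- The set `F_d` of stars, relative to the set of profiles `𝔓`. -/
def Fd (𝒱 : SubmodUniverse U) (𝔓 : Set (Set U)) : Set (Set U) :=
  {σ | IsStar 𝒱.toSepUniverse σ ∧
    (∀ P ∈ 𝔓, ∀ Q ∈ 𝔓, σ ⊆ P → σ ⊆ Q → P = Q) ∧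
    (∀ P ∈ 𝔓, ¬ σ ⊆ P → ∃ s ∈ σ, WeaklyOrientsAs P (𝒱.inv s)) ∧
    (∀ P ∈ 𝔓, σ ⊆ P → EffProp 𝒱 σ P)}
section Helpers

variable (𝒱 : SubmodUniverse U)

lemma aux_inv_sup (a b : U) : 𝒱.inv (a ⊔ b) = 𝒱.inv a ⊓ 𝒱.inv b := by
  apply le_antisymm
  · exact le_inf ((𝒱.le_iff _ _).1 le_sup_left) ((𝒱.le_iff _ _).1 le_sup_right)
  · rw [𝒱.le_iff, 𝒱.inv_inv]
    apply sup_le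
    · rw [𝒱.le_iff, 𝒱.inv_inv]; exact inf_le_left
    · rw [𝒱.le_iff, 𝒱.inv_inv]; exact inf_le_right

lemma aux_ord_sup (a b : U) : 𝒱.ord (a ⊔ b) = 𝒱.ord (𝒱.inv a ⊓ 𝒱.inv b) := by
  rw [← aux_inv_sup, 𝒱.ord_inv]

lemma aux_le_inv {a b : U} (h : a ≤ 𝒱.inv b) : b ≤ 𝒱.inv a := by
  rw [𝒱.le_iff, 𝒱.inv_inv]; exact h

lemma aux_inv_le {a b : U} (h : 𝒱.inv a ≤ b) : 𝒱.inv b ≤ a := by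
  rw [𝒱.le_iff, 𝒱.inv_inv]; exact h

variable {𝒱}

lemma aux_not_both {k : ℕ} {P : Set U} (hP : IsProfile 𝒱.toSepUniverse (Sk 𝒱 k) P) {a : U}
    (h1 : a ∈ P) (h2 : 𝒱.inv a ∈ P) : False := by
  have := hP.2.2 a h1 a h1
  rw [sup_idem] at this
  exact this h2

lemma aux_lt {k : ℕ} {P : Set U} (hP : IsProfile 𝒱.toSepUniverse (Sk 𝒱 k) P) {a : U}
    (h1 : a ∈ P) : 𝒱.ord a < k := hP.1.1 h1

lemma aux_orient {k : ℕ} {P : Set U} (hP : IsProfile 𝒱.toSepUniverse (Sk 𝒱 k) P) {a : U}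
    (h1 : 𝒱.ord a < k) : a ∈ P ∨ 𝒱.inv a ∈ P := (hP.1.2 a h1).1

lemma aux_sup_mem {k : ℕ} {P : Set U} (hP : IsProfile 𝒱.toSepUniverse (Sk 𝒱 k) P) {a b : U}
    (ha : a ∈ P) (hb : b ∈ P) (h : 𝒱.ord (a ⊔ b) < k) : a ⊔ b ∈ P :=
  (aux_orient hP h).resolve_right (hP.2.2 a ha b hb)

/-- Consistency, in the form used: if `b ≤ a ∈ P` and `b* ∈ P` then `b = a*`. -/
lemma aux_cons {k : ℕ} {P : Set U} (hP : IsProfile 𝒱.toSepUniverse (Sk 𝒱 k) P) {a b : U}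
    (ha : a ∈ P) (hb : 𝒱.inv b ∈ P) (h : b ≤ a) : b = 𝒱.inv a := by
  by_contra hne
  refine hP.2.1 (𝒱.inv b) hb a ha ?_ ?_
  · intro heq
    have : a ∈ ({𝒱.inv b, 𝒱.inv (𝒱.inv b)} : Set U) := by
      rw [heq]; exact Set.mem_insert _ _
    rw [𝒱.inv_inv] at this
    rcases this with h1 | h1
    · apply hne; rw [h1, 𝒱.inv_inv]
    · have h1 : a = b := h1
      subst h1
      exact aux_not_both hP ha hb
  · rw [𝒱.inv_inv]; exact h

lemma aux_down {k : ℕ} {P : Set U} (hP : IsProfile 𝒱.toSepUniverse (Sk 𝒱 k) P) {a b : U}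
    (ha : a ∈ P) (h : b ≤ a) (hlt : 𝒱.ord b < 𝒱.ord a) : b ∈ P := by
  rcases aux_orient hP (lt_trans hlt (aux_lt hP ha)) with h1 | h1
  · exact h1
  · have := aux_cons hP ha h1 h
    rw [this, 𝒱.ord_inv] at hlt
    exact absurd hlt (lt_irrefl _)

/-- `q` has minimum order among the elements of `Q` above `x`, and is maximal with that order. -/
def AuxGood (𝒱 : SubmodUniverse U) (x : U) (Q : Set U) (q : U) : Prop :=
  q ∈ Q ∧ x ≤ q ∧ (∀ z ∈ Q, x ≤ z → 𝒱.ord q ≤ 𝒱.ord z) ∧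
    ∀ z ∈ Q, q ≤ z → 𝒱.ord z ≤ 𝒱.ord q → z = q

lemma aux_good_exists {x : U} {Q : Set U} (h : ∃ z ∈ Q, x ≤ z) : ∃ q, AuxGood 𝒱 x Q q := by
  obtain ⟨z, hz, hxz⟩ := h
  obtain ⟨m, ⟨hm, hxm⟩, hmin⟩ := Set.exists_min_image {z | z ∈ Q ∧ x ≤ z} 𝒱.ord
    (Set.toFinite _) ⟨z, hz, hxz⟩
  obtain ⟨q, hq⟩ := (Set.toFinite {z | z ∈ Q ∧ x ≤ z ∧ 𝒱.ord z ≤ 𝒱.ord m}).exists_maximal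
    ⟨m, hm, hxm, le_rfl⟩
  refine ⟨q, hq.1.1, hq.1.2.1, ?_, ?_⟩
  · intro z hz hxz
    exact hq.1.2.2.trans (hmin z ⟨hz, hxz⟩)
  · intro z hz hqz ho
    exact le_antisymm (hq.2 ⟨hz, hq.1.2.1.trans hqz, ho.trans hq.1.2.2⟩ hqz) hqz

lemma aux_pair' {x : U} {Q₁ Q₂ : Set U} {k₁ k₂ : ℕ}
    (h₁ : IsProfile 𝒱.toSepUniverse (Sk 𝒱 k₁) Q₁) (h₂ : IsProfile 𝒱.toSepUniverse (Sk 𝒱 k₂) Q₂)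
    (hr₂ : StronglyRobust 𝒱 Q₂) {q₁ q₂ : U}
    (g₁ : AuxGood 𝒱 x Q₁ q₁) (g₂ : AuxGood 𝒱 x Q₂ q₂) (hle : 𝒱.ord q₂ ≤ 𝒱.ord q₁) :
    q₁ ≤ q₂ ∨ q₂ ≤ q₁ ∨ 𝒱.inv q₂ ≤ q₁ := by
  obtain ⟨m₁, l₁, min₁, max₁⟩ := g₁
  obtain ⟨m₂, l₂, min₂, max₂⟩ := g₂
  have hk := aux_lt h₁ m₁
  have hinf : 𝒱.ord q₁ ≤ 𝒱.ord (q₁ ⊓ q₂) := by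
    by_contra hlt
    push Not at hlt
    exact absurd (min₁ _ (aux_down h₁ m₁ inf_le_left hlt) (le_inf l₁ l₂)) (not_le.2 hlt)
  have hsub := 𝒱.submod q₁ q₂
  rcases aux_orient h₁ (lt_of_le_of_lt hle hk) with h | h
  · right; left
    have ho : 𝒱.ord (q₁ ⊔ q₂) ≤ 𝒱.ord q₁ := by omega
    have := max₁ _ (aux_sup_mem h₁ m₁ h (by omega)) le_sup_left ho
    rw [← this]; exact le_sup_right
  · by_cases hc : 𝒱.ord (q₁ ⊔ 𝒱.inv q₂) ≤ 𝒱.ord q₁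
    · right; right
      have := max₁ _ (aux_sup_mem h₁ m₁ h (by omega)) le_sup_left hc
      rw [← this]; exact le_sup_right
    · left
      have hs2 := 𝒱.submod q₁ (𝒱.inv q₂)
      rw [𝒱.ord_inv] at hs2
      have e : 𝒱.ord (q₂ ⊔ 𝒱.inv q₁) = 𝒱.ord (q₁ ⊓ 𝒱.inv q₂) := by
        rw [aux_ord_sup, 𝒱.inv_inv, inf_comm]
      rcases hr₂ q₂ m₂ q₁ (by rw [sup_comm]; omega) (by omega) with h' | h'
      · have := max₂ _ h' le_sup_left (by rw [sup_comm]; omega)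
        rw [← this]; exact le_sup_right
      · have := min₂ _ h' (l₂.trans le_sup_left)
        omega

lemma aux_pair {x : U} {Q₁ Q₂ : Set U}
    (h₁ : ProfileIn 𝒱 Q₁ ∧ StronglyRobust 𝒱 Q₁) (h₂ : ProfileIn 𝒱 Q₂ ∧ StronglyRobust 𝒱 Q₂)
    {q₁ q₂ : U} (g₁ : AuxGood 𝒱 x Q₁ q₁) (g₂ : AuxGood 𝒱 x Q₂ q₂) :
    q₁ ≤ q₂ ∨ q₂ ≤ q₁ ∨ 𝒱.inv q₂ ≤ q₁ := by
  obtain ⟨⟨k₁, p₁⟩, r₁⟩ := h₁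
  obtain ⟨⟨k₂, p₂⟩, r₂⟩ := h₂
  rcases le_total (𝒱.ord q₂) (𝒱.ord q₁) with h | h
  · exact aux_pair' p₁ p₂ r₂ g₁ g₂ h
  · rcases aux_pair' p₂ p₁ r₁ g₂ g₁ h with h | h | h
    · exact Or.inr (Or.inl h)
    · exact Or.inl h
    · exact Or.inr (Or.inr (aux_inv_le 𝒱 h))

/-- Every profile weakly orients an element of a star in `F_d`. -/
lemma aux_orients {𝔓 : Set (Set U)} {r : U} (h : ∃ σ ∈ Fd 𝒱 𝔓, r ∈ σ) {P : Set U} (hP : P ∈ 𝔓) :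
    (∃ z ∈ P, r ≤ z) ∨ (∃ z ∈ P, 𝒱.inv r ≤ z) := by
  obtain ⟨σ, ⟨hstar, -, hor, -⟩, hrσ⟩ := h
  by_cases hin : σ ⊆ P
  · exact Or.inl ⟨r, hin hrσ, le_rfl⟩
  · obtain ⟨x, hx, z, hz, hxz⟩ := hor P hP hin
    by_cases hxr : r = x
    · subst hxr; exact Or.inr ⟨z, hz, hxz⟩
    · exact Or.inl ⟨z, hz, (hstar r hrσ x hx hxr).trans hxz⟩

/-- If `r` is critical then some profile contains `r*` efficiently. -/
lemma aux_key {𝔓 : Set (Set U)} (h𝔓 : ∀ P ∈ 𝔓, ProfileIn 𝒱 P ∧ StronglyRobust 𝒱 P) {r : U}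
    (hr : FCritical 𝒱.toSepUniverse (Fd 𝒱 𝔓) r) :
    ∃ Q ∈ 𝔓, 𝒱.inv r ∈ Q ∧ ∀ q ∈ Q, 𝒱.inv r ≤ q → 𝒱.ord r ≤ 𝒱.ord q := by
  by_contra hno
  push Not at hno
  obtain ⟨hex, hcrit⟩ := hr
  have hne : r ≠ 𝒱.inv r := by
    intro he
    obtain ⟨σ, hσ, hrσ⟩ := hex
    refine hcrit ⟨σ, hσ, ?_⟩
    rw [← he]
    simpa using hrσ
  -- the general form of the contradiction
  have main : ∀ T : Set U, (∀ y ∈ T, y ≤ r ∧ 𝒱.ord y < 𝒱.ord r) →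
      IsStar 𝒱.toSepUniverse T →
      (∀ Q ∈ 𝔓, (¬ ∃ z ∈ Q, r ≤ z) → ∃ y ∈ T, WeaklyOrientsAs Q (𝒱.inv y)) →
      (∀ Q ∈ 𝔓, (¬ ∃ z ∈ Q, r ≤ z) → ¬ T ⊆ Q) → False := by
    intro T hT hstar hw hninc
    have hnot : ∀ Q ∈ 𝔓, ¬ insert (𝒱.inv r) T ⊆ Q := by
      intro Q hQ hsub
      by_cases hz : ∃ z ∈ Q, r ≤ z
      · obtain ⟨z, hz, hrz⟩ := hz
        have hrQ : 𝒱.inv r ∈ Q := hsub (Set.mem_insert _ _)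
        obtain ⟨⟨k, hP⟩, -⟩ := h𝔓 Q hQ
        have h1 := aux_cons hP hz hrQ hrz
        have hzr : r ≤ 𝒱.inv r := by rw [h1, 𝒱.inv_inv, ← h1]; exact hrz
        obtain ⟨q, hq, hrq, hlt⟩ := hno Q hQ hrQ
        have h2 := aux_cons hP hq hrQ (hzr.trans hrq)
        rw [h2, 𝒱.ord_inv] at hlt
        exact lt_irrefl _ hlt
      · exact hninc Q hQ hz ((Set.subset_insert _ _).trans hsub)
    refine hcrit ⟨insert (𝒱.inv r) T, ⟨?_, ?_, ?_, ?_⟩, ?_⟩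
    · rintro a (rfl | ha) b (rfl | hb) hab
      · exact absurd rfl hab
      · exact (𝒱.le_iff _ _).1 (hT b hb).1
      · rw [𝒱.inv_inv]; exact (hT a ha).1
      · exact hstar a ha b hb hab
    · intro P hP _ _ h _
      exact absurd h (hnot P hP)
    · intro P hP _
      by_cases hz : ∃ z ∈ P, r ≤ z
      · refine ⟨𝒱.inv r, Set.mem_insert _ _, ?_⟩
        rw [𝒱.inv_inv]; exact hz
      · obtain ⟨y, hy, hw⟩ := hw P hP hz
        exact ⟨y, Set.mem_insert_of_mem _ hy, hw⟩
    · intro P hP h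
      exact absurd h (hnot P hP)
    · ext y
      constructor
      · rintro ⟨hy | hy, hy2 | hy2⟩
        · exact hy
        · exact hy
        · rw [hy2] at hy; exact absurd (hT r hy).2 (lt_irrefl _)
        · exact hy2
      · intro hy
        exact ⟨Or.inl hy, Or.inr hy⟩
  -- candidates
  let C : Set U := {q | ∃ Q ∈ 𝔓, (¬ ∃ z ∈ Q, r ≤ z) ∧ AuxGood 𝒱 (𝒱.inv r) Q q}
  have hCex : ∀ Q ∈ 𝔓, (¬ ∃ z ∈ Q, r ≤ z) → ∃ q ∈ C, AuxGood 𝒱 (𝒱.inv r) Q q := by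
    intro Q hQ hn
    obtain ⟨q, hq⟩ := aux_good_exists (𝒱 := 𝒱) ((aux_orients hex hQ).resolve_left hn)
    exact ⟨q, ⟨Q, hQ, hn, hq⟩, hq⟩
  have hCprop : ∀ q ∈ C, 𝒱.inv r ≤ q ∧ 𝒱.ord q < 𝒱.ord r := by
    rintro q ⟨Q, hQ, hn, hq⟩
    refine ⟨hq.2.1, ?_⟩
    obtain ⟨⟨k, hP⟩, -⟩ := h𝔓 Q hQ
    by_cases hrQ : 𝒱.inv r ∈ Q
    · obtain ⟨z, hz, hrz, hlt⟩ := hno Q hQ hrQ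
      exact lt_of_le_of_lt (hq.2.2.1 z hz hrz) hlt
    · have h1 := aux_lt hP hq.1
      by_contra hcon
      rcases aux_orient hP (a := r) (by omega) with h | h
      · exact hn ⟨r, h, le_rfl⟩
      · exact hrQ h
  have hCpair : ∀ q₁ ∈ C, ∀ q₂ ∈ C, q₁ ≤ q₂ ∨ q₂ ≤ q₁ ∨ 𝒱.inv q₂ ≤ q₁ := by
    rintro q₁ ⟨Q₁, hQ₁, -, g₁⟩ q₂ ⟨Q₂, hQ₂, -, g₂⟩
    exact aux_pair (h𝔓 Q₁ hQ₁) (h𝔓 Q₂ hQ₂) g₁ g₂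
  have hCmin : ∀ q ∈ C, ∃ m, m ≤ q ∧ Minimal (· ∈ C) m := by
    intro q hq
    exact (Set.toFinite C).exists_le_minimal hq
  by_cases hcase : ∃ q ∈ C, Minimal (· ∈ C) (𝒱.inv q)
  · obtain ⟨q, hqC, hmin⟩ := hcase
    have hp1 := hCprop q hqC
    have hp2 := hCprop _ hmin.1
    refine main {q, 𝒱.inv q} ?_ ?_ ?_ ?_
    · rintro y (rfl | rfl)
      · refine ⟨?_, hp1.2⟩
        have := aux_inv_le 𝒱 hp2.1
        rwa [𝒱.inv_inv] at this
      · exact ⟨aux_inv_le 𝒱 hp1.1, hp2.2⟩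
    · rintro a (rfl | rfl) b (rfl | rfl) hab
      · exact absurd rfl hab
      · rw [𝒱.inv_inv]
      · exact le_rfl
      · exact absurd rfl hab
    · intro Q hQ hn
      obtain ⟨q₃, hq₃, g₃⟩ := hCex Q hQ hn
      have hcmp : 𝒱.inv q ≤ q₃ ∨ q ≤ q₃ := by
        rcases hCpair q₃ hq₃ _ hmin.1 with h | h | h
        · exact Or.inl (hmin.2 hq₃ h)
        · exact Or.inl h
        · rw [𝒱.inv_inv] at h; exact Or.inr h
      rcases hcmp with h | h
      · exact ⟨q, Or.inl rfl, q₃, g₃.1, h⟩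
      · refine ⟨𝒱.inv q, Or.inr rfl, q₃, g₃.1, ?_⟩
        rw [𝒱.inv_inv]; exact h
    · intro Q hQ _ hsub
      obtain ⟨⟨k, hP⟩, -⟩ := h𝔓 Q hQ
      exact aux_not_both hP (hsub (Or.inl rfl)) (hsub (Or.inr rfl))
  · refine main {y | Minimal (· ∈ C) (𝒱.inv y)} ?_ ?_ ?_ ?_
    · intro y hy
      have h := hCprop _ hy.1
      rw [𝒱.ord_inv] at h
      exact ⟨(𝒱.le_iff _ _).2 h.1, h.2⟩
    · intro a ha b hb hab
      rcases hCpair _ hb.1 _ ha.1 with h | h | h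
      · exact absurd (le_antisymm ((𝒱.le_iff _ _).2 h) ((𝒱.le_iff _ _).2 (ha.2 hb.1 h))) hab
      · exact absurd (le_antisymm ((𝒱.le_iff _ _).2 (hb.2 ha.1 h)) ((𝒱.le_iff _ _).2 h)) hab
      · rw [𝒱.inv_inv] at h; exact h
    · intro Q hQ hn
      obtain ⟨q, hq, g⟩ := hCex Q hQ hn
      obtain ⟨m, hmq, hm⟩ := hCmin q hq
      refine ⟨𝒱.inv m, ?_, q, g.1, ?_⟩
      · show Minimal (· ∈ C) (𝒱.inv (𝒱.inv m))
        rw [𝒱.inv_inv]; exact hm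
      · rw [𝒱.inv_inv]; exact hmq
    · intro Q hQ hn hsub
      obtain ⟨q, hq, g⟩ := hCex Q hQ hn
      obtain ⟨m, hmq, hm⟩ := hCmin q hq
      obtain ⟨⟨k, hP⟩, -⟩ := h𝔓 Q hQ
      have hmQ : 𝒱.inv m ∈ Q := by
        apply hsub
        show Minimal (· ∈ C) (𝒱.inv (𝒱.inv m))
        rw [𝒱.inv_inv]; exact hm
      have := aux_cons hP g.1 hmQ hmq
      exact hcase ⟨q, hq, this ▸ hm⟩

end Helpers

/-- In a distributive submodular universe with a set `𝔓` of
pairwise distinguishable strongly robust profiles, if `r` and `s` are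
`F_d`-critical with `r ≤ s*`, then every splice between `r` and `s*` is weakly
oriented by every profile in `𝔓`. -/
theorem critical_splice_weakly_oriented {W : Type*} [DistribLattice W] [Fintype W]
    (𝒱 : SubmodUniverse W) (𝔓 : Set (Set W))
    (h𝔓 : ∀ P ∈ 𝔓, ProfileIn 𝒱 P ∧ StronglyRobust 𝒱 P)
    (hdist : ∀ P ∈ 𝔓, ∀ Q ∈ 𝔓, P ≠ Q → Distinguishable 𝒱.toSepUniverse P Q)
    (r s : W) (hr : FCritical 𝒱.toSepUniverse (Fd 𝒱 𝔓) r)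
    (hs : FCritical 𝒱.toSepUniverse (Fd 𝒱 𝔓) s)
    (hrs : r ≤ 𝒱.inv s)
    (t : W) (ht : SpliceBetween 𝒱 t r (𝒱.inv s)) :
    ∀ P ∈ 𝔓, WeaklyOrients 𝒱.toSepUniverse P t := by
  intro P hP
  by_contra hbad
  have hb1 : ∀ z ∈ P, ¬ t ≤ z := fun z hz h => hbad (Or.inl ⟨z, hz, h⟩)
  have hb2 : ∀ z ∈ P, ¬ 𝒱.inv t ≤ z := fun z hz h => hbad (Or.inr ⟨z, hz, h⟩)
  obtain ⟨hrt, hts, hmin⟩ := ht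
  obtain ⟨Q, hQ, hrQ, heff⟩ := aux_key h𝔓 hr
  obtain ⟨⟨k, hPk⟩, hrob⟩ := h𝔓 P hP
  obtain ⟨⟨l, hQl⟩, -⟩ := h𝔓 Q hQ
  have hkt : k ≤ 𝒱.ord t := by
    by_contra hlt
    rcases aux_orient hPk (a := t) (by omega) with h | h
    · exact hb1 _ h le_rfl
    · exact hb2 _ h le_rfl
  obtain ⟨p, hp, hsp⟩ : ∃ p ∈ P, s ≤ p := by
    rcases aux_orients hs.1 hP with h | ⟨z, hz, hsz⟩
    · exact h
    · exact absurd (hts.trans hsz) (hb1 z hz)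
  have hpk := aux_lt hPk hp
  have htr : 𝒱.ord t ≤ 𝒱.ord r := hmin r le_rfl hrs
  have hrl := aux_lt hQl hrQ
  rw [𝒱.ord_inv] at hrl
  -- first corner
  have c1 : 𝒱.ord (r ⊓ 𝒱.inv p) < 𝒱.ord r := by
    have h1 := hmin (r ⊔ 𝒱.inv p) le_sup_left (sup_le hrs ((𝒱.le_iff _ _).1 hsp))
    have h2 := 𝒱.submod r (𝒱.inv p)
    rw [𝒱.ord_inv] at h2
    omega
  -- second corner, using strong robustness
  have c2 : 𝒱.ord (r ⊓ p) < 𝒱.ord r := by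
    have h1 : 𝒱.ord (p ⊔ 𝒱.inv t) ≤ 𝒱.ord p := by
      have h2 := 𝒱.submod p (𝒱.inv t)
      have h3 := hmin (𝒱.inv p ⊔ t) (hrt.trans le_sup_right)
        (sup_le ((𝒱.le_iff _ _).1 hsp) hts)
      rw [aux_ord_sup, 𝒱.inv_inv] at h3
      rw [𝒱.ord_inv] at h2
      omega
    have h2 : 𝒱.ord p < 𝒱.ord (p ⊔ t) := by
      by_contra hlt
      rcases hrob p hp t (by omega) h1 with h | h
      · exact hb1 _ h le_sup_right
      · exact hb2 _ h le_sup_right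
    have h3 := 𝒱.submod p t
    have h4 := 𝒱.submod r (p ⊓ t)
    have h5 := hmin (r ⊔ p ⊓ t) le_sup_left ((sup_le hrt inf_le_right).trans hts)
    have h6 : r ⊓ (p ⊓ t) = r ⊓ p := by
      rw [← inf_assoc]
      exact inf_eq_left.2 (inf_le_left.trans hrt)
    rw [h6] at h4
    omega
  rcases aux_orient hQl (a := p) (by omega) with h | h
  · have e : 𝒱.ord (𝒱.inv r ⊔ p) = 𝒱.ord (r ⊓ 𝒱.inv p) := by
      rw [aux_ord_sup, 𝒱.inv_inv]
    have := heff _ (aux_sup_mem hQl hrQ h (by omega)) le_sup_left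
    omega
  · have e : 𝒱.ord (𝒱.inv r ⊔ 𝒱.inv p) = 𝒱.ord (r ⊓ p) := by
      rw [aux_ord_sup, 𝒱.inv_inv, 𝒱.inv_inv]
    have := heff _ (aux_sup_mem hQl hrQ h (by omega)) le_sup_left
    omega

end SepDemo
end

section
/- Let U be a distributive submodular universe and 𝒫 a nonempty set of pairwise distinguishable strongly robust profiles in U. Then for every consistent orientation O of the separation system U itself there exists a star σ ∈ F_d with σ ⊆ O. -/
namespace SepDemo

variable {U : Type*} [Lattice U] [Fintype U]

section Aux

theorem inv_le_of (𝒰 : SepUniverse U) {a b : U} (h : a ≤ b) : 𝒰.inv b ≤ 𝒰.inv a :=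
  (𝒰.le_iff a b).1 h

theorem le_inv_comm (𝒰 : SepUniverse U) {a b : U} (h : a ≤ 𝒰.inv b) : b ≤ 𝒰.inv a := by
  have := inv_le_of 𝒰 h
  rwa [𝒰.inv_inv] at this

theorem inv_le_comm (𝒰 : SepUniverse U) {a b : U} (h : 𝒰.inv a ≤ b) : 𝒰.inv b ≤ a := by
  have := inv_le_of 𝒰 h
  rwa [𝒰.inv_inv] at this

theorem inv_sup (𝒰 : SepUniverse U) (a b : U) : 𝒰.inv (a ⊔ b) = 𝒰.inv a ⊓ 𝒰.inv b := by
  apply le_antisymm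
  · exact le_inf (inv_le_of 𝒰 le_sup_left) (inv_le_of 𝒰 le_sup_right)
  · apply le_inv_comm
    exact sup_le (le_inv_comm 𝒰 inf_le_left) (le_inv_comm 𝒰 inf_le_right)

theorem nested_inv_left (𝒰 : SepUniverse U) {r s : U} :
    Nested 𝒰 (𝒰.inv r) s ↔ Nested 𝒰 r s := by
  simp only [Nested, 𝒰.inv_inv]; tauto

theorem nested_inv_right (𝒰 : SepUniverse U) {r s : U} :
    Nested 𝒰 r (𝒰.inv s) ↔ Nested 𝒰 r s := by
  simp only [Nested, 𝒰.inv_inv]; tauto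

theorem nested_symm (𝒰 : SepUniverse U) {r s : U} (h : Nested 𝒰 r s) : Nested 𝒰 s r := by
  rcases h with h | h | h | h
  · exact Or.inr (Or.inr (Or.inr (inv_le_of 𝒰 h)))
  · exact Or.inr (Or.inl (le_inv_comm 𝒰 h))
  · exact Or.inr (Or.inr (Or.inl (inv_le_comm 𝒰 h)))
  · exact Or.inl ((𝒰.le_iff _ _).2 h)

/-- The fish lemma for one corner. -/
theorem fish (𝒰 : SepUniverse U) {r s t : U} (hrs : ¬ Nested 𝒰 r s)
    (hr : Nested 𝒰 t r) (hs : Nested 𝒰 t s) : Nested 𝒰 t (r ⊔ s) := by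
  have key : ∀ x y : U, Nested 𝒰 t x → t ≤ x ⊔ y ∨ 𝒰.inv t ≤ x ⊔ y ∨ x ≤ t ∨ x ≤ 𝒰.inv t := by
    intro x y h
    rcases h with h | h | h | h
    · exact Or.inl (h.trans le_sup_left)
    · exact Or.inr (Or.inr (Or.inr (le_inv_comm 𝒰 h)))
    · exact Or.inr (Or.inl (h.trans le_sup_left))
    · exact Or.inr (Or.inr (Or.inl ((𝒰.le_iff _ _).2 h)))
  have h1 := key r s hr
  have h2 := key s r hs
  rw [sup_comm s r] at h2
  rcases h1 with h1 | h1 | h1 | h1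
  · exact Or.inl h1
  · exact Or.inr (Or.inr (Or.inl h1))
  · rcases h2 with h2 | h2 | h2 | h2
    · exact Or.inl h2
    · exact Or.inr (Or.inr (Or.inl h2))
    · exact Or.inr (Or.inr (Or.inr (inv_le_of 𝒰 (sup_le h1 h2))))
    · exact absurd (Or.inr (Or.inl (h1.trans (le_inv_comm 𝒰 h2)))) hrs
  · rcases h2 with h2 | h2 | h2 | h2
    · exact Or.inl h2
    · exact Or.inr (Or.inr (Or.inl h2))
    · exact absurd (Or.inr (Or.inl (h1.trans (inv_le_of 𝒰 h2)))) hrs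
    · exact Or.inr (Or.inl (le_inv_comm 𝒰 (sup_le h1 h2)))

/-- Corners of `r` and `s`. -/
def IsCorner (𝒰 : SepUniverse U) (r s c : U) : Prop :=
  ∃ r' s', (r' = r ∨ r' = 𝒰.inv r) ∧ (s' = s ∨ s' = 𝒰.inv s) ∧ c = r' ⊔ s'

theorem corner_nested (𝒰 : SepUniverse U) {r s c t : U} (hc : IsCorner 𝒰 r s c)
    (hrs : ¬ Nested 𝒰 r s)
    (hr : Nested 𝒰 t r) (hs : Nested 𝒰 t s) : Nested 𝒰 t c := by
  obtain ⟨r', s', hr', hs', rfl⟩ := hc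
  apply fish
  · rcases hr' with rfl | rfl <;> rcases hs' with rfl | rfl <;>
      simpa only [nested_inv_left, nested_inv_right] using hrs
  · rcases hr' with rfl | rfl
    · exact hr
    · exact (nested_inv_right 𝒰).2 hr
  · rcases hs' with rfl | rfl
    · exact hs
    · exact (nested_inv_right 𝒰).2 hs

theorem corner_nested_self (𝒰 : SepUniverse U) {r s c : U} (hc : IsCorner 𝒰 r s c) :
    Nested 𝒰 r c := by
  obtain ⟨r', s', hr', hs', rfl⟩ := hc
  rcases hr' with rfl | rfl
  · exact Or.inl le_sup_left
  · exact Or.inr (Or.inr (Or.inl le_sup_left))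

/-- Downward closure of profiles, up to the degenerate exception. -/
theorem prof_down {𝒰 : SepUniverse U} {S P : Set U} (hP : IsProfile 𝒰 S P) {y z : U}
    (hy : y ∈ P) (hz : z ∈ S) (hzy : z ≤ y) : z ∈ P ∨ z = 𝒰.inv y := by
  by_contra hcon
  push Not at hcon
  have h1 : 𝒰.inv z ∈ P := ((hP.1.2 z hz).1).resolve_left hcon.1
  refine hP.2.1 _ h1 y hy ?_ (by rwa [𝒰.inv_inv])
  intro he
  have : z ∈ ({y, 𝒰.inv y} : Set U) := by
    rw [← he]; simp [𝒰.inv_inv]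
  rcases this with h | h
  · exact hcon.1 (h ▸ hy)
  · exact hcon.2 h

theorem prof_not_both {𝒰 : SepUniverse U} {S P : Set U} (hP : IsProfile 𝒰 S P) {y : U}
    (hy : y ∈ P) : 𝒰.inv y ∉ P := by
  have := hP.2.2 y hy y hy
  rwa [sup_idem] at this

theorem dist_inv {𝒰 : SepUniverse U} {s : U} {P Q : Set U} :
    Distinguishes 𝒰 (𝒰.inv s) P Q ↔ Distinguishes 𝒰 s P Q := by
  simp only [Distinguishes, 𝒰.inv_inv]; tauto

theorem dist_symm {𝒰 : SepUniverse U} {s : U} {P Q : Set U} :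
    Distinguishes 𝒰 s P Q ↔ Distinguishes 𝒰 s Q P := by
  simp only [Distinguishes]; tauto

theorem eff_inv {𝒱 : SubmodUniverse U} {s : U} {P Q : Set U} :
    EffDistinguishes 𝒱 (𝒱.inv s) P Q ↔ EffDistinguishes 𝒱 s P Q := by
  simp only [EffDistinguishes, dist_inv, 𝒱.ord_inv]

theorem eff_symm {𝒱 : SubmodUniverse U} {s : U} {P Q : Set U} :
    EffDistinguishes 𝒱 s P Q ↔ EffDistinguishes 𝒱 s Q P := by
  simp only [EffDistinguishes, dist_symm (P := P) (Q := Q)]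

theorem prof_ord {𝒱 : SubmodUniverse U} {k : ℕ} {P : Set U}
    (hP : IsProfile 𝒱.toSepUniverse (Sk 𝒱 k) P) {s : U} (hs : s ∈ P) : 𝒱.ord s < k :=
  hP.1.1 hs

/-- Downward closure when the orders differ. -/
theorem prof_down_lt {𝒱 : SubmodUniverse U} {k : ℕ} {P : Set U}
    (hP : IsProfile 𝒱.toSepUniverse (Sk 𝒱 k) P) {y z : U}
    (hy : y ∈ P) (hz : 𝒱.ord z < 𝒱.ord y) (hzy : z ≤ y) : z ∈ P := by
  rcases prof_down hP hy (show z ∈ Sk 𝒱 k from hz.trans (prof_ord hP hy)) hzy with h | h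
  · exact h
  · rw [h, 𝒱.ord_inv] at hz; omega

/-- A corner `r ⊔ s` of small order efficiently distinguishes. -/
theorem corner_eff {𝒱 : SubmodUniverse U} {kq kq' : ℕ} {Q Q' : Set U}
    (hQ : IsProfile 𝒱.toSepUniverse (Sk 𝒱 kq) Q)
    (hQ' : IsProfile 𝒱.toSepUniverse (Sk 𝒱 kq') Q') {r s : U}
    (hrQ : r ∈ Q) (hs : s ∈ Q) (hs' : 𝒱.inv s ∈ Q')
    (he : ∀ t, Distinguishes 𝒱.toSepUniverse t Q Q' → 𝒱.ord s ≤ 𝒱.ord t)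
    (ho : 𝒱.ord (r ⊔ s) ≤ 𝒱.ord s) : EffDistinguishes 𝒱 (r ⊔ s) Q Q' := by
  have hnot : 𝒱.inv (r ⊔ s) ∉ Q := hQ.2.2 r hrQ s hs
  have hmem : r ⊔ s ∈ Q :=
    ((hQ.1.2 (r ⊔ s) (lt_of_le_of_lt ho (prof_ord hQ hs))).1).resolve_right hnot
  have hlt : 𝒱.ord s < kq' := by have := prof_ord hQ' hs'; rwa [𝒱.ord_inv] at this
  have hmem' : 𝒱.inv (r ⊔ s) ∈ Q' := by
    rcases prof_down hQ' hs' (z := 𝒱.inv (r ⊔ s))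
      (by show 𝒱.ord _ < _; rw [𝒱.ord_inv]; omega) (inv_le_of _ le_sup_right) with h | h
    · exact h
    · rw [𝒱.inv_inv] at h
      exact absurd (by rw [h]; exact hs) hnot
  exact ⟨Or.inl ⟨hmem, hmem'⟩, fun t ht => ho.trans (he t ht)⟩

theorem splinter_core {𝒱 : SubmodUniverse U} {kt kt' kq kq' : ℕ} {T T' Q Q' : Set U}
    (hT : IsProfile 𝒱.toSepUniverse (Sk 𝒱 kt) T)
    (hT' : IsProfile 𝒱.toSepUniverse (Sk 𝒱 kt') T')
    (hQ : IsProfile 𝒱.toSepUniverse (Sk 𝒱 kq) Q)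
    (hQ' : IsProfile 𝒱.toSepUniverse (Sk 𝒱 kq') Q')
    (hrob : StronglyRobust 𝒱 T) {r s : U}
    (hr : 𝒱.inv r ∈ T) (hr' : r ∈ T')
    (her : ∀ t, Distinguishes 𝒱.toSepUniverse t T T' → 𝒱.ord r ≤ 𝒱.ord t)
    (hrQ : r ∈ Q) (hrQ' : r ∈ Q') (hs : s ∈ Q) (hs' : 𝒱.inv s ∈ Q')
    (hes : ∀ t, Distinguishes 𝒱.toSepUniverse t Q Q' → 𝒱.ord s ≤ 𝒱.ord t) :
    EffDistinguishes 𝒱 (r ⊔ s) Q Q' ∨ EffDistinguishes 𝒱 (r ⊔ 𝒱.inv s) Q Q' := by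
  by_cases h1 : 𝒱.ord (r ⊔ s) ≤ 𝒱.ord s
  · exact Or.inl (corner_eff hQ hQ' hrQ hs hs' hes h1)
  by_cases h2 : 𝒱.ord (r ⊔ 𝒱.inv s) ≤ 𝒱.ord s
  · right
    rw [eff_symm]
    refine corner_eff hQ' hQ hrQ' hs' (by rwa [𝒱.inv_inv]) ?_ (by rwa [𝒱.ord_inv])
    intro t ht
    rw [𝒱.ord_inv]
    exact hes t (dist_symm.1 ht)
  exfalso
  have e1 := 𝒱.submod r s
  have e2 := 𝒱.submod r (𝒱.inv s)
  rw [𝒱.ord_inv] at e2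
  have f1 : 𝒱.ord (𝒱.inv r ⊔ 𝒱.inv s) = 𝒱.ord (r ⊓ s) := by
    rw [← 𝒱.ord_inv, inv_sup, 𝒱.inv_inv, 𝒱.inv_inv]
  have f2 : 𝒱.ord (𝒱.inv r ⊔ s) = 𝒱.ord (r ⊓ 𝒱.inv s) := by
    rw [← 𝒱.ord_inv, inv_sup, 𝒱.inv_inv]
  have fin : ∀ x, 𝒱.inv r ≤ x → x ∈ T → 𝒱.ord x < 𝒱.ord r → False := by
    intro x hx hxT hxo
    have hx' : 𝒱.inv x ∈ T' :=
      prof_down_lt hT' hr' (by rwa [𝒱.ord_inv]) (inv_le_comm _ hx)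
    have := her x (Or.inl ⟨hxT, hx'⟩)
    omega
  rcases hrob _ hr s (by rw [𝒱.ord_inv]; omega) (by rw [𝒱.ord_inv]; omega) with h | h
  · exact fin _ le_sup_left h (by omega)
  · exact fin _ le_sup_left h (by omega)

theorem splinter {𝒱 : SubmodUniverse U} {P P' Q Q' : Set U}
    (hP : ProfileIn 𝒱 P ∧ StronglyRobust 𝒱 P) (hP' : ProfileIn 𝒱 P' ∧ StronglyRobust 𝒱 P')
    (hQ : ProfileIn 𝒱 Q) (hQ' : ProfileIn 𝒱 Q') {r s : U}
    (hr : EffDistinguishes 𝒱 r P P') (hs : EffDistinguishes 𝒱 s Q Q')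
    (hrs : 𝒱.ord r ≤ 𝒱.ord s) (hn : ¬ EffDistinguishes 𝒱 r Q Q') :
    ∃ c, IsCorner 𝒱.toSepUniverse r s c ∧ EffDistinguishes 𝒱 c Q Q' := by
  wlog hsQ : s ∈ Q ∧ 𝒱.inv s ∈ Q' generalizing Q Q'
  · obtain ⟨c, h1, h2⟩ := this hQ' hQ (eff_symm.1 hs) (fun h => hn (eff_symm.1 h)) (by
      rcases hs.1 with h | h
      · exact absurd h hsQ
      · exact ⟨h.2, h.1⟩)
    exact ⟨c, h1, eff_symm.1 h2⟩
  obtain ⟨kq, hQ⟩ := hQ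
  obtain ⟨kq', hQ'⟩ := hQ'
  have l1 := prof_ord hQ hsQ.1
  have l2 := prof_ord hQ' hsQ.2
  rw [𝒱.ord_inv] at l2
  have hnd : ¬ Distinguishes 𝒱.toSepUniverse r Q Q' := fun h =>
    hn ⟨h, fun t ht => hrs.trans (hs.2 t ht)⟩
  wlog hrQ : r ∈ Q generalizing r
  · have hrQ2 : 𝒱.inv r ∈ Q :=
      ((hQ.1.2 r (lt_of_le_of_lt hrs l1)).1).resolve_left hrQ
    obtain ⟨c, ⟨r', s', a, b, d⟩, h2⟩ := this (r := 𝒱.inv r) (eff_inv.2 hr)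
      (by rwa [𝒱.ord_inv]) (fun h => hn (eff_inv.1 h)) (fun h => hnd (dist_inv.1 h)) hrQ2
    rw [𝒱.inv_inv] at a
    exact ⟨c, ⟨r', s', a.symm, b, d⟩, h2⟩
  have hrQ' : r ∈ Q' := by
    refine ((hQ'.1.2 r (lt_of_le_of_lt hrs l2)).1).resolve_right ?_
    intro h
    exact hnd (Or.inl ⟨hrQ, h⟩)
  have : EffDistinguishes 𝒱 (r ⊔ s) Q Q' ∨ EffDistinguishes 𝒱 (r ⊔ 𝒱.inv s) Q Q' := by
    obtain ⟨⟨k, hPk⟩, hPr⟩ := hP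
    obtain ⟨⟨k', hPk'⟩, hPr'⟩ := hP'
    rcases hr.1 with ⟨h1, h2⟩ | ⟨h1, h2⟩
    · exact splinter_core hPk' hPk hQ hQ' hPr' h2 h1
        (fun t ht => hr.2 t (dist_symm.1 ht)) hrQ hrQ' hsQ.1 hsQ.2 hs.2
    · exact splinter_core hPk hPk' hQ hQ' hPr h1 h2 hr.2 hrQ hrQ' hsQ.1 hsQ.2 hs.2
  rcases this with h | h
  · exact ⟨_, ⟨r, s, Or.inl rfl, Or.inl rfl, rfl⟩, h⟩
  · exact ⟨_, ⟨r, 𝒱.inv s, Or.inl rfl, Or.inr rfl, rfl⟩, h⟩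

/-- `s` efficiently distinguishes some pair in `𝔓`. -/
def EffPair (𝒱 : SubmodUniverse U) (𝔓 : Set (Set U)) (s : U) : Prop :=
  ∃ P ∈ 𝔓, ∃ Q ∈ 𝔓, EffDistinguishes 𝒱 s P Q

theorem tot_level (𝒱 : SubmodUniverse U) (𝔓 : Set (Set U))
    (h𝔓 : ∀ P ∈ 𝔓, ProfileIn 𝒱 P ∧ StronglyRobust 𝒱 P) (n : ℕ) :
    ∃ N : Set U, (∀ s ∈ N, EffPair 𝒱 𝔓 s ∧ 𝒱.ord s < n) ∧ NestedSet 𝒱.toSepUniverse N ∧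
      ∀ P ∈ 𝔓, ∀ Q ∈ 𝔓, ∀ s, EffDistinguishes 𝒱 s P Q → 𝒱.ord s < n →
        ∃ f ∈ N, EffDistinguishes 𝒱 f P Q := by
  classical
  induction n with
  | zero => exact ⟨∅, by simp, by simp [NestedSet], by simp⟩
  | succ n ih =>
    obtain ⟨N₀, hN₀, hnest₀, hhit₀⟩ := ih
    let good : Set (Set U) := {N | (∀ s ∈ N, EffPair 𝒱 𝔓 s ∧ 𝒱.ord s < n + 1) ∧
      NestedSet 𝒱.toSepUniverse N}
    have hg₀ : N₀ ∈ good := ⟨fun s hs => ⟨(hN₀ s hs).1, by have := (hN₀ s hs).2; omega⟩, hnest₀⟩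
    obtain ⟨N, hN₀N, hN⟩ := (Set.toFinite good).exists_le_maximal hg₀
    refine ⟨N, hN.prop.1, hN.prop.2, ?_⟩
    intro P hP Q hQ s hs hsn
    by_cases hlt : 𝒱.ord s < n
    · obtain ⟨f, hf, h⟩ := hhit₀ P hP Q hQ s hs hlt
      exact ⟨f, hN₀N hf, h⟩
    have hsn' : 𝒱.ord s = n := by omega
    by_contra hcon
    push Not at hcon
    let cross : U → Set U := fun a => {r ∈ N | ¬ Nested 𝒱.toSepUniverse r a}
    obtain ⟨a, ha, hmin⟩ := Set.exists_min_image {a : U | EffDistinguishes 𝒱 a P Q}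
      (fun a => (cross a).ncard) (Set.toFinite _) ⟨s, hs⟩
    have ha : EffDistinguishes 𝒱 a P Q := ha
    have hao : 𝒱.ord a = n := by
      have h1 := ha.2 s hs.1
      have h2 := hs.2 a ha.1
      omega
    by_cases hcr : ∃ r ∈ N, ¬ Nested 𝒱.toSepUniverse r a
    · obtain ⟨r, hrN, hra⟩ := hcr
      obtain ⟨⟨R, hR, R', hR', hrR⟩, hro⟩ := hN.prop.1 r hrN
      obtain ⟨c, hc, hce⟩ := splinter (h𝔓 R hR) (h𝔓 R' hR') (h𝔓 P hP).1 (h𝔓 Q hQ).1 hrR ha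
        (by omega) (hcon r hrN)
      have hle := hmin c hce
      have hlt : (cross c).ncard < (cross a).ncard := by
        apply Set.ncard_lt_ncard _ (Set.toFinite _)
        refine ⟨?_, ?_⟩
        · rintro t ⟨htN, ht⟩
          refine ⟨htN, fun hta => ht ?_⟩
          exact corner_nested _ hc hra (hN.prop.2 t htN r hrN) hta
        · intro hsub
          exact (hsub ⟨hrN, hra⟩).2 (corner_nested_self _ hc)
      exact absurd hle (not_le.2 hlt)
    · push Not at hcr
      have hgood : insert a N ∈ good := by
        refine ⟨?_, ?_⟩
        · rintro x (rfl | hx)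
          · exact ⟨⟨P, hP, Q, hQ, ha⟩, by omega⟩
          · exact hN.prop.1 x hx
        · rintro x (rfl | hx) y (rfl | hy)
          · exact Or.inl le_rfl
          · exact nested_symm _ (hcr y hy)
          · exact hcr x hx
          · exact hN.prop.2 x hx y hy
      have := hN.le_of_ge hgood (Set.subset_insert a N) (Set.mem_insert a N)
      exact hcon a this ha

/-- A nested, involution-closed set efficiently distinguishing all pairs. -/
theorem tot (𝒱 : SubmodUniverse U) (𝔓 : Set (Set U))
    (h𝔓 : ∀ P ∈ 𝔓, ProfileIn 𝒱 P ∧ StronglyRobust 𝒱 P)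
    (hdist : ∀ P ∈ 𝔓, ∀ Q ∈ 𝔓, P ≠ Q → Distinguishable 𝒱.toSepUniverse P Q) :
    ∃ N : Set U, (∀ s ∈ N, 𝒱.inv s ∈ N) ∧
      (∀ s ∈ N, ∃ P ∈ 𝔓, ∃ Q ∈ 𝔓, s ∈ P ∧ 𝒱.inv s ∈ Q ∧
        ∀ t, Distinguishes 𝒱.toSepUniverse t P Q → 𝒱.ord s ≤ 𝒱.ord t) ∧
      NestedSet 𝒱.toSepUniverse N ∧
      ∀ P ∈ 𝔓, ∀ Q ∈ 𝔓, P ≠ Q → ∃ f ∈ N, f ∈ P ∧ 𝒱.inv f ∈ Q ∧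
        ∀ t, Distinguishes 𝒱.toSepUniverse t P Q → 𝒱.ord f ≤ 𝒱.ord t := by
  classical
  obtain ⟨n, hn⟩ : ∃ n, ∀ s : U, 𝒱.ord s < n :=
    ⟨Finset.univ.sup 𝒱.ord + 1, fun s => Nat.lt_succ_of_le (Finset.le_sup (Finset.mem_univ s))⟩
  obtain ⟨N, hN, hnest, hhit⟩ := tot_level 𝒱 𝔓 h𝔓 n
  have hE : ∀ s, s ∈ N ∨ 𝒱.inv s ∈ N → EffPair 𝒱 𝔓 s := by
    rintro s (h | h)
    · exact (hN s h).1
    · obtain ⟨P, hP, Q, hQ, he⟩ := (hN _ h).1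
      exact ⟨P, hP, Q, hQ, eff_inv.1 he⟩
  refine ⟨{s | s ∈ N ∨ 𝒱.inv s ∈ N}, ?_, ?_, ?_, ?_⟩
  · rintro s (h | h)
    · right; rwa [𝒱.inv_inv]
    · exact Or.inl h
  · intro s hs
    obtain ⟨P, hP, Q, hQ, he⟩ := hE s hs
    rcases he.1 with h | h
    · exact ⟨P, hP, Q, hQ, h.1, h.2, he.2⟩
    · exact ⟨Q, hQ, P, hP, h.2, h.1, fun t ht => he.2 t (dist_symm.1 ht)⟩
  · rintro r (hr | hr) s (hs | hs)
    · exact hnest r hr s hs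
    · exact (nested_inv_right _).1 (hnest _ hr _ hs)
    · exact (nested_inv_left _).1 (hnest _ hr _ hs)
    · exact (nested_inv_left _).1 ((nested_inv_right _).1 (hnest _ hr _ hs))
  · intro P hP Q hQ hPQ
    obtain ⟨s₀, hs₀⟩ := hdist P hP Q hQ hPQ
    obtain ⟨s, hs, hmin⟩ := Set.exists_min_image
      {a : U | Distinguishes 𝒱.toSepUniverse a P Q} 𝒱.ord (Set.toFinite _) ⟨s₀, hs₀⟩
    obtain ⟨f, hf, he⟩ := hhit P hP Q hQ s ⟨hs, hmin⟩ (hn s)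
    rcases he.1 with h | h
    · exact ⟨f, Or.inl hf, h.1, h.2, he.2⟩
    · refine ⟨𝒱.inv f, Or.inr (by rwa [𝒱.inv_inv]), h.1, by rw [𝒱.inv_inv]; exact h.2, ?_⟩
      intro t ht
      rw [𝒱.ord_inv]
      exact he.2 t ht

theorem Fd_main (𝒱 : SubmodUniverse U) (𝔓 : Set (Set U))
    (h𝔓 : ∀ P ∈ 𝔓, ProfileIn 𝒱 P ∧ StronglyRobust 𝒱 P)
    (hdist : ∀ P ∈ 𝔓, ∀ Q ∈ 𝔓, P ≠ Q → Distinguishable 𝒱.toSepUniverse P Q)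
    (O : Set U) (hO : IsOrientation 𝒱.toSepUniverse Set.univ O)
    (hc : Consistent 𝒱.toSepUniverse O) :
    ∃ σ ∈ Fd 𝒱 𝔓, σ ⊆ O := by
  classical
  obtain ⟨N, hinv, hE, hnest, hhit⟩ := tot 𝒱 𝔓 h𝔓 hdist
  let A : Set U := {x | x ∈ N ∧ x ∈ O}
  have hup : ∀ x ∈ A, ∃ g, x ≤ g ∧ Maximal (· ∈ A) g := fun x hx =>
    (Set.toFinite A).exists_le_maximal hx
  have hor : ∀ x, x ∈ O ∨ 𝒱.inv x ∈ O := fun x => (hO.2 x (Set.mem_univ x)).1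
  refine ⟨{g | Maximal (· ∈ A) g}, ⟨?_, ?_, ?_, ?_⟩, fun g hg => hg.prop.2⟩
  · intro r hr s hs hne
    have hr : Maximal (· ∈ A) r := hr
    have hs : Maximal (· ∈ A) s := hs
    rcases hnest r hr.prop.1 s hs.prop.1 with h | h | h | h
    · exact absurd (hr.eq_of_le hs.prop h) hne
    · exact h
    · exfalso
      refine hc r hr.prop.2 s hs.prop.2 ?_ h
      intro he
      have : s ∈ ({r, 𝒱.inv r} : Set U) := by rw [he]; simp
      rcases this with h' | h'
      · exact hne h'.symm
      · have h' : s = 𝒱.inv r := h'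
        have := (hO.2 r (Set.mem_univ r)).2 hr.prop.2 (h' ▸ hs.prop.2)
        exact hne (this.trans h'.symm)
    · exact absurd (hs.eq_of_le hr.prop ((𝒱.le_iff _ _).2 h)).symm hne
  · intro P hP Q hQ hσP hσQ
    by_contra hPQ
    have key : ∀ P ∈ 𝔓, ∀ Q ∈ 𝔓, {g | Maximal (· ∈ A) g} ⊆ P → {g | Maximal (· ∈ A) g} ⊆ Q →
        ∀ f, f ∈ N → f ∈ O → f ∈ P → 𝒱.inv f ∈ Q → False := by
      intro P hP Q hQ hσP hσQ f hfN hfO hfP hfQ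
      obtain ⟨g, hfg, hg⟩ := hup f ⟨hfN, hfO⟩
      obtain ⟨⟨k, hPk⟩, -⟩ := h𝔓 P hP
      obtain ⟨⟨l, hQl⟩, -⟩ := h𝔓 Q hQ
      have hfl := prof_ord hQl hfQ
      rw [𝒱.ord_inv] at hfl
      rcases prof_down hQl (hσQ hg) hfl hfg with h | h
      · exact prof_not_both hQl h hfQ
      · have := prof_not_both hPk (hσP hg)
        exact this (h ▸ hfP)
    obtain ⟨f, hfN, hfP, hfQ, -⟩ := hhit P hP Q hQ hPQ
    rcases hor f with h | h
    · exact key P hP Q hQ hσP hσQ f hfN h hfP hfQ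
    · exact key Q hQ P hP hσQ hσP _ (hinv f hfN) h hfQ (by rwa [𝒱.inv_inv])
  · intro P hP hσ
    obtain ⟨s, hs, hsP⟩ := Set.not_subset.1 hσ
    have hs : Maximal (· ∈ A) s := hs
    by_cases hsP' : 𝒱.inv s ∈ P
    · exact ⟨s, hs, 𝒱.inv s, hsP', le_rfl⟩
    obtain ⟨⟨k, hPk⟩, -⟩ := h𝔓 P hP
    have hk : k ≤ 𝒱.ord s := by
      by_contra hlt
      rcases (hPk.1.2 s (not_le.1 hlt)).1 with h | h
      · exact hsP h
      · exact hsP' h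
    obtain ⟨Q, hQ, Q', hQ', hsQ, hsQ', heff⟩ := hE s hs.prop.1
    have hPQ : P ≠ Q := fun h => hsP (h ▸ hsQ)
    obtain ⟨f, hfN, hfP, hfQ, -⟩ := hhit P hP Q hQ hPQ
    obtain ⟨⟨q, hQk⟩, -⟩ := h𝔓 Q hQ
    obtain ⟨⟨q', hQk'⟩, -⟩ := h𝔓 Q' hQ'
    have hfk := prof_ord hPk hfP
    have hsq' := prof_ord hQk' hsQ'
    rw [𝒱.ord_inv] at hsq'
    have hfQ' : 𝒱.inv f ∈ Q' := by
      refine ((hQk'.1.2 f (show 𝒱.ord f < q' by omega)).1).resolve_left ?_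
      intro h
      have := heff f (Or.inr ⟨hfQ, h⟩)
      omega
    rcases hnest s hs.prop.1 f hfN with h | h | h | h
    · rcases hor f with hf | hf
      · have := hs.eq_of_le (y := f) ⟨hfN, hf⟩ h
        subst this
        omega
      · obtain ⟨g, hfg, hg⟩ := hup _ ⟨hinv f hfN, hf⟩
        exact ⟨g, hg, f, hfP, inv_le_comm _ hfg⟩
    · exfalso
      have : f ∈ Q' := prof_down_lt hQk' hsQ' (by rw [𝒱.ord_inv]; omega) (le_inv_comm _ h)
      exact prof_not_both hQk' this hfQ'
    · exact ⟨s, hs, f, hfP, h⟩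
    · exfalso
      have : f ∈ Q := prof_down_lt hQk hsQ (by omega) ((𝒱.le_iff _ _).2 h)
      exact prof_not_both hQk this hfQ
  · rintro P hP hσ ⟨s, hs, s', hs'P, hss', hord⟩
    have hsP := hσ hs
    have hs : Maximal (· ∈ A) s := hs
    obtain ⟨⟨k, hPk⟩, -⟩ := h𝔓 P hP
    obtain ⟨Q, hQ, Q', hQ', hsQ, hsQ', heff⟩ := hE s hs.prop.1
    obtain ⟨⟨q, hQk⟩, -⟩ := h𝔓 Q hQ
    obtain ⟨⟨q', hQk'⟩, -⟩ := h𝔓 Q' hQ'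
    have hs'Q' : 𝒱.inv s' ∈ Q' :=
      prof_down_lt hQk' hsQ' (by rw [𝒱.ord_inv, 𝒱.ord_inv]; exact hord) (inv_le_of _ hss')
    have hsq := prof_ord hQk hsQ
    have hs'Q : 𝒱.inv s' ∈ Q := by
      refine ((hQk.1.2 s' (show 𝒱.ord s' < q by omega)).1).resolve_left ?_
      intro h
      have := heff s' (Or.inl ⟨h, hs'Q'⟩)
      omega
    have hPQ : P ≠ Q := by
      rintro rfl
      exact prof_not_both hPk hs'P hs'Q
    obtain ⟨f, hfN, hfP, hfQ, hfe⟩ := hhit P hP Q hQ hPQ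
    have hfs := hfe s' (Or.inl ⟨hs'P, hs'Q⟩)
    rcases hnest s hs.prop.1 f hfN with h | h | h | h
    · have hfO : f ∈ O := by
        rcases hor f with hf | hf
        · exact hf
        · obtain ⟨g, hfg, hg⟩ := hup _ ⟨hinv f hfN, hf⟩
          have hfk := prof_ord hPk hfP
          rcases prof_down hPk (hσ hg) (show 𝒱.ord (𝒱.inv f) < k by rwa [𝒱.ord_inv]) hfg
            with h' | h'
          · exact absurd h' (prof_not_both hPk hfP)
          · have : f = g := by rw [← 𝒱.inv_inv f, h', 𝒱.inv_inv]
            exact this ▸ hg.prop.2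
      have := hs.eq_of_le (y := f) ⟨hfN, hfO⟩ h
      subst this
      omega
    · have hfQ' : f ∈ Q' :=
        prof_down_lt hQk' hsQ' (by rw [𝒱.ord_inv]; omega) (le_inv_comm _ h)
      have := heff f (Or.inr ⟨hfQ, hfQ'⟩)
      omega
    · have : 𝒱.inv f ∈ P :=
        prof_down_lt hPk hsP (by rw [𝒱.ord_inv]; omega) (inv_le_comm _ h)
      exact prof_not_both hPk hfP this
    · have : f ∈ Q := prof_down_lt hQk hsQ (by omega) ((𝒱.le_iff _ _).2 h)
      exact prof_not_both hQk this hfQ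

end Aux

/-- In a distributive submodular universe with a nonempty set
`𝔓` of pairwise distinguishable strongly robust profiles, every consistent
orientation of the separation system `U` itself includes a star from `F_d`. -/
theorem Fd_no_tangle {W : Type*} [DistribLattice W] [Fintype W]
    (𝒱 : SubmodUniverse W) (𝔓 : Set (Set W)) (hne : 𝔓.Nonempty)
    (h𝔓 : ∀ P ∈ 𝔓, ProfileIn 𝒱 P ∧ StronglyRobust 𝒱 P)
    (hdist : ∀ P ∈ 𝔓, ∀ Q ∈ 𝔓, P ≠ Q → Distinguishable 𝒱.toSepUniverse P Q)
    (O : Set W) (hO : IsOrientation 𝒱.toSepUniverse Set.univ O)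
    (hc : Consistent 𝒱.toSepUniverse O) :
    ∃ σ ∈ Fd 𝒱 𝔓, σ ⊆ O := by
  exact Fd_main 𝒱 𝔓 h𝔓 hdist O hO hc

end SepDemo
end
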